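/- The initial element of a chain is unique: if x and y are both initial elements and they belong to the same chain (i.e., x ⊑ y or y ⊑ x), then x = y. -/

import Mathlib

def SB.Valid {α β : Type*} (P : Set α) (Q : Set β) : α ⊕ β → Prop
  | Sum.inl p => p ∈ P
  | Sum.inr q => q ∈ Q

def SB.step {α β : Type*} (f : α → β) (g : β → α) : α ⊕ β → α ⊕ β
  | Sum.inl p => Sum.inr (f p)
  | Sum.inr q => Sum.inl (g q)

def SB.ChainLE {α β : Type*} (f : α → β) (g : β → α) : α ⊕ β → α ⊕ β → Prop :=
  Relation.ReflTransGen (fun x y => y = SB.step f g x)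

def SB.Initial {α β : Type*} (P : Set α) (Q : Set β) (f : α → β) (g : β → α) :
    α ⊕ β → Prop
  | Sum.inl p => p ∉ g '' Q
  | Sum.inr q => q ∉ f '' P

namespace SB

variable {α β : Type*} {P : Set α} {Q : Set β} {f : α → β} {g : β → α} {x y : α ⊕ β}

theorem Valid.step (hfm : Set.MapsTo f P Q) (hgm : Set.MapsTo g Q P) (hx : Valid P Q x) :
    Valid P Q (SB.step f g x) := by
  cases x with
  | inl p => exact hfm hx
  | inr q => exact hgm hx

theorem Valid.of_chainLE (hfm : Set.MapsTo f P Q) (hgm : Set.MapsTo g Q P)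
    (hx : Valid P Q x) (hxy : ChainLE f g x y) : Valid P Q y := by
  induction hxy with
  | refl => exact hx
  | tail _ hstep ih => exact hstep ▸ ih.step hfm hgm

theorem Valid.not_initial_step (hx : Valid P Q x) : ¬ Initial P Q f g (SB.step f g x) := by
  cases x with
  | inl p => exact not_not_intro (Set.mem_image_of_mem f hx)
  | inr q => exact not_not_intro (Set.mem_image_of_mem g hx)

theorem Initial.eq_of_chainLE (hfm : Set.MapsTo f P Q) (hgm : Set.MapsTo g Q P)
    (hx : Valid P Q x) (hy : Initial P Q f g y) (hxy : ChainLE f g x y) : x = y := by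
  obtain rfl | ⟨z, hxz, rfl⟩ := Relation.ReflTransGen.cases_tail hxy
  · rfl
  · have hz : Valid P Q z := hx.of_chainLE hfm hgm hxz
    exact absurd hy hz.not_initial_step

end SB

theorem initial_unique_general {α β : Type*} {P : Set α} {Q : Set β}
    {f : α → β} {g : β → α} (hfm : Set.MapsTo f P Q) (hgm : Set.MapsTo g Q P)
    {x y : α ⊕ β} (hxv : SB.Valid P Q x) (hyv : SB.Valid P Q y)
    (hxi : SB.Initial P Q f g x) (hyi : SB.Initial P Q f g y)
    (hxy : SB.ChainLE f g x y ∨ SB.ChainLE f g y x) :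
    x = y := by
  obtain hle | hge := hxy
  · exact hyi.eq_of_chainLE hfm hgm hxv hle
  · exact (hxi.eq_of_chainLE hfm hgm hyv hge).symm

theorem initial_unique {α β : Type*} (P : Set α) (Q : Set β)
    (f : α → β) (g : β → α)
    (hfm : Set.MapsTo f P Q) (hfi : Set.InjOn f P)
    (hgm : Set.MapsTo g Q P) (hgi : Set.InjOn g Q)
    (x y : α ⊕ β) (hxv : SB.Valid P Q x) (hyv : SB.Valid P Q y)
    (hxi : SB.Initial P Q f g x) (hyi : SB.Initial P Q f g y)
    (hxy : SB.ChainLE f g x y ∨ SB.ChainLE f g y x) :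
    x = y :=
  initial_unique_general hfm hgm hxv hyv hxi hyi hxy
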